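/- (Quasi-Fredholm spectrum inclusion) Let λ ∈ ℂ and t > 0 with φ_λ(t) ≠ 0. Suppose the bounded operator c_λ(t)·I − S(t) is quasi-Fredholm of degree d, i.e. there exists d ∈ ℕ such that for every n ≥ d both R((c_λ(t)·I − S(t))^n) and R(c_λ(t)·I − S(t)) + N((c_λ(t)·I − S(t))^n) are closed in X, and dis(c_λ(t)·I − S(t)) = d. Then for every n ≥ d both R((λ − A)^n) and R(λ − A) + N((λ − A)^n) are closed in X, and dis(λ − A) ≤ d; in particular λ − A is quasi-Fredholm. -/

import Mathlib

/-!
Write `B = λ - A`, `T = c_λ(t) I - S(t)`, `P = D_λ(t)` and let `φ = φ_λ(t)`. Integration by parts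
and closedness of `A` give the factorisation `T = BP` (also `T = PB` on `D(A)`), and integrating
this identity in time gives `B L_λ(t) + e^{-λt} P = φ I`. As `φ ≠ 0`, this is a Bézout identity
`BU + vP = I`, where `U = φ⁻¹ L_λ(t)` commutes with `B` on `D(A)` and `v` is a scalar.

The rest is algebra. The Bézout identity shows that `R(Bⁿ) = (Pⁿ)⁻¹(R(Tⁿ))`
(`image_eq_preimage`) and `R(B) + N(Bⁿ) = P⁻¹(R(T) + N(Tⁿ))` (`image_add_ker_eq_preimage`), so
both sets are closed whenever their counterparts for `T` are, since `P` is bounded. On `N(B)` the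
operator `vP` is the identity, hence `R(Bᵈ) ∩ N(B) ⊆ R(Tᵈ) ∩ N(T)` (`image_inter_ker_subset`); the
latter set equals `R(Tᵐ) ∩ N(T)` for `m ≥ d`, and `R(Tᵐ) ⊆ R(Bᵐ)`.
-/

open MeasureTheory intervalIntegral Pointwise

noncomputable section

/-- `D_λ(t) x = ∫₀ᵗ e^{λ(t−r)} S(r) x dr`. -/
noncomputable def Dop {X : Type*} [NormedAddCommGroup X] [NormedSpace ℂ X]
    (S : ℝ → X →L[ℂ] X) (l : ℂ) (t : ℝ) (x : X) : X :=
  ∫ r in (0:ℝ)..t, Complex.exp (l * ((t - r : ℝ) : ℂ)) • S r x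

/-- `c_λ(t) = ∫₀ᵗ e^{λ(t−s)} s^{α−1}/Γ(α) ds`. -/
noncomputable def cConst (α : ℝ) (l : ℂ) (t : ℝ) : ℂ :=
  ∫ s in (0:ℝ)..t,
    Complex.exp (l * ((t - s : ℝ) : ℂ)) * ((s ^ (α - 1) : ℝ) : ℂ) / ((Real.Gamma α : ℝ) : ℂ)

/-- `L_λ(t) x = ∫₀ᵗ e^{−λs} D_λ(s) x ds`. -/
noncomputable def Lop {X : Type*} [NormedAddCommGroup X] [NormedSpace ℂ X]
    (S : ℝ → X →L[ℂ] X) (l : ℂ) (t : ℝ) (x : X) : X :=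
  ∫ s in (0:ℝ)..t, Complex.exp (-l * ((s : ℝ) : ℂ)) • Dop S l s x

/-- `φ_λ(t) = ∫₀ᵗ ∫₀^τ e^{−λr} r^{α−1}/Γ(α) dr dτ`. -/
noncomputable def phiConst (α : ℝ) (l : ℂ) (t : ℝ) : ℂ :=
  ∫ τ in (0:ℝ)..t, ∫ r in (0:ℝ)..τ,
    Complex.exp (-l * ((r : ℝ) : ℂ)) * ((r ^ (α - 1) : ℝ) : ℂ) / ((Real.Gamma α : ℝ) : ℂ)

/-- Iterated domain `D(A^n)` of the (possibly unbounded) operator given by the map `f = λ − A`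
with domain `D`: `D^0 = X`, `D^{n+1} = {x ∈ D | f x ∈ D^n}`. -/
def iterDom {X : Type*} (D : Set X) (f : X → X) : ℕ → Set X
  | 0 => Set.univ
  | n + 1 => {x | x ∈ D ∧ f x ∈ iterDom D f n}

/-- The bounded operator `c_λ(t)·I − S(t)`. -/
noncomputable def cSop {X : Type*} [NormedAddCommGroup X] [NormedSpace ℂ X]
    (S : ℝ → X →L[ℂ] X) (α : ℝ) (l : ℂ) (t : ℝ) : X →L[ℂ] X :=
  cConst α l t • ContinuousLinearMap.id ℂ X - S t

/-- `D_{λ,n}(t) = Σ_{i=1}^n binom(n,i)·(φ_λ(t))^{n−i}·e^{−iλt}·(−D_λ(t))^{i−1}`. -/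
noncomputable def Dln {X : Type*} [NormedAddCommGroup X] [NormedSpace ℂ X]
    (S : ℝ → X →L[ℂ] X) (α : ℝ) (l : ℂ) (t : ℝ) (n : ℕ) (x : X) : X :=
  ∑ i ∈ Finset.Icc 1 n,
    ((n.choose i : ℂ) * (phiConst α l t) ^ (n - i) * Complex.exp (-(i : ℂ) * l * (t : ℂ))) •
      ((fun y => - Dop S l t y)^[i - 1] x)

/-! ### Consequences of a Bézout identity `BU + vP = I` -/

section Algebra

lemma iterDom_image_succ_subset {X : Type*} {D : Set X} {B : X → X} (n : ℕ) :
    B^[n + 1] '' iterDom D B (n + 1) ⊆ B^[n] '' iterDom D B n := by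
  rintro _ ⟨x, hx, rfl⟩
  exact ⟨B x, hx.2, rfl⟩

lemma iterDom_image_antitone {X : Type*} {D : Set X} {B : X → X} {m n : ℕ} (h : m ≤ n) :
    B^[n] '' iterDom D B n ⊆ B^[m] '' iterDom D B m :=
  antitone_nat_of_succ_le (f := fun n => B^[n] '' iterDom D B n)
    (fun n => iterDom_image_succ_subset n) h

/-- A map `U` into the domain of `B` that commutes with `B` on that domain maps `D(Bⁿ)` into
`D(Bⁿ⁺¹)` and commutes with `Bⁿ` there. -/
lemma iterate_comm_of_comm {X : Type*} {D : Set X} {B U : X → X} (hU : ∀ x, U x ∈ D)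
    (hUB : ∀ x ∈ D, U (B x) = B (U x)) (n : ℕ) {z : X} (hz : z ∈ iterDom D B n) :
    U z ∈ iterDom D B (n + 1) ∧ B^[n] (U z) = U (B^[n] z) := by
  induction n generalizing z with
  | zero => exact ⟨⟨hU z, trivial⟩, rfl⟩
  | succ n ih =>
    obtain ⟨h1, h2⟩ := ih hz.2
    rw [hUB z hz.1] at h1 h2
    exact ⟨⟨hU z, h1⟩, h2⟩

/-- If `T = BP` on `X` and `T = PB` on the domain of `B`, then `Tⁿ = BⁿPⁿ` on `X`. -/
lemma factor_iterate {X : Type*} {D : Set X} {B P T : X → X} (hP : ∀ x, P x ∈ D)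
    (hBP : ∀ x, B (P x) = T x) (hPB : ∀ x ∈ D, P (B x) = T x) (n : ℕ) (x : X) :
    P^[n] x ∈ iterDom D B n ∧ B^[n] (P^[n] x) = T^[n] x := by
  have hcomm : Function.Commute P T := fun y => by rw [← hBP, hPB _ (hP y)]
  induction n generalizing x with
  | zero => exact ⟨trivial, rfl⟩
  | succ n ih =>
    obtain ⟨h1, h2⟩ := ih (T x)
    have e : B (P^[n + 1] x) = P^[n] (T x) := by
      rw [Function.iterate_succ_apply', hBP]
      exact ((hcomm.iterate_left n) x).symm
    refine ⟨⟨?_, ?_⟩, ?_⟩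
    · rw [Function.iterate_succ_apply']; exact hP _
    · rw [e]; exact h1
    · rw [Function.iterate_succ_apply, e, h2, ← Function.iterate_succ_apply]

/-- On `D(Bⁿ)` one also has `Tⁿ = PⁿBⁿ`. -/
lemma factor_iterate' {X : Type*} {D : Set X} {B P T : X → X} (hP : ∀ x, P x ∈ D)
    (hBP : ∀ x, B (P x) = T x) (hPB : ∀ x ∈ D, P (B x) = T x) (n : ℕ) {x : X}
    (hx : x ∈ iterDom D B n) : P^[n] (B^[n] x) = T^[n] x := by
  have hcomm : Function.Commute P T := fun y => by rw [← hBP, hPB _ (hP y)]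
  induction n generalizing x with
  | zero => rfl
  | succ n ih =>
    rw [Function.iterate_succ_apply', Function.iterate_succ_apply, ih hx.2,
      (hcomm.iterate_right n) (B x), hPB x hx.1, ← Function.iterate_succ_apply]

variable {X : Type*} [NormedAddCommGroup X] [NormedSpace ℂ X]

lemma iterDom_add {D : Submodule ℂ X} {B : X →ₗ[ℂ] X} (n : ℕ) {x y : X}
    (hx : x ∈ iterDom (D : Set X) B n) (hy : y ∈ iterDom (D : Set X) B n) :
    x + y ∈ iterDom (D : Set X) B n := by
  induction n generalizing x y with
  | zero => trivial
  | succ n ih => exact ⟨D.add_mem hx.1 hy.1, by rw [map_add]; exact ih hx.2 hy.2⟩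

lemma iterDom_smul {D : Submodule ℂ X} {B : X →ₗ[ℂ] X} (n : ℕ) (c : ℂ) {x : X}
    (hx : x ∈ iterDom (D : Set X) B n) : c • x ∈ iterDom (D : Set X) B n := by
  induction n generalizing x with
  | zero => trivial
  | succ n ih => exact ⟨D.smul_mem c hx.1, by rw [map_smul]; exact ih hx.2⟩

variable {D : Submodule ℂ X} {B : X →ₗ[ℂ] X} {P T : X →L[ℂ] X} {U : X → X} {v : ℂ}

/-- The Bézout identity `BU + vP = I` lets one cancel `P` in membership of `R(Bⁿ)`. -/
lemma mem_image_of_map_mem (hU : ∀ x, U x ∈ D)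
    (hBU : ∀ x, B (U x) + v • P x = x) (hUB : ∀ x ∈ D, U (B x) + v • P x = x)
    (n : ℕ) {y : X} (hy : P y ∈ B^[n] '' iterDom (D : Set X) B n) :
    y ∈ B^[n] '' iterDom (D : Set X) B n := by
  have hcomm : ∀ x ∈ (D : Set X), U (B x) = B (U x) := fun x hx => by
    rw [← add_left_inj (v • P x), hUB x hx, hBU x]
  induction n with
  | zero => exact ⟨y, trivial, rfl⟩
  | succ n ih =>
    obtain ⟨z, hz, rfl⟩ := ih (iterDom_image_succ_subset n hy)
    obtain ⟨x, hx, hxy⟩ := hy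
    obtain ⟨h1, h2⟩ := iterate_comm_of_comm hU hcomm n hz
    refine ⟨U z + v • x, iterDom_add _ h1 (iterDom_smul _ _ hx), ?_⟩
    rw [iterate_map_add, Function.iterate_succ_apply', h2]
    conv_rhs => rw [← hBU (B^[n] z), ← hxy]
    congr 1
    rw [← Module.End.coe_pow, map_smul]

lemma mem_image_of_iterate_mem (hU : ∀ x, U x ∈ D)
    (hBU : ∀ x, B (U x) + v • P x = x) (hUB : ∀ x ∈ D, U (B x) + v • P x = x)
    (n k : ℕ) {y : X} (hy : P^[k] y ∈ B^[n] '' iterDom (D : Set X) B n) :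
    y ∈ B^[n] '' iterDom (D : Set X) B n := by
  induction k with
  | zero => exact hy
  | succ k ih =>
    rw [Function.iterate_succ_apply'] at hy
    exact ih (mem_image_of_map_mem hU hBU hUB n hy)

/-- `R(Bⁿ)` is the preimage of `R(Tⁿ)` under `Pⁿ`. -/
lemma image_eq_preimage (hP : ∀ x, P x ∈ D) (hBP : ∀ x, B (P x) = T x)
    (hPB : ∀ x ∈ D, P (B x) = T x) (hU : ∀ x, U x ∈ D)
    (hBU : ∀ x, B (U x) + v • P x = x) (hUB : ∀ x ∈ D, U (B x) + v • P x = x) (n : ℕ) :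
    B^[n] '' iterDom (D : Set X) B n = P^[n] ⁻¹' Set.range (T ^ n) := by
  ext y
  constructor
  · rintro ⟨x, hx, rfl⟩
    exact ⟨x, by rw [factor_iterate' (T := T) hP hBP hPB n hx, FunLike.coe_pow_eq_iterate]⟩
  · rintro ⟨x, hx⟩
    obtain ⟨h1, h2⟩ := factor_iterate (T := T) hP hBP hPB n x
    refine mem_image_of_iterate_mem hU hBU hUB n n ⟨P^[n] x, h1, ?_⟩
    rw [h2, ← hx, FunLike.coe_pow_eq_iterate]

/-- `w ≡ vⁿPⁿw` modulo `R(B)`. -/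
lemma exists_eq_add_pow_smul (hP : ∀ x, P x ∈ D) (hBP : ∀ x, B (P x) = T x)
    (hPB : ∀ x ∈ D, P (B x) = T x) (hU : ∀ x, U x ∈ D)
    (hBU : ∀ x, B (U x) + v • P x = x) (n : ℕ) (w : X) :
    ∃ z ∈ D, w = B z + v ^ n • P^[n] w := by
  induction n with
  | zero => exact ⟨0, D.zero_mem, by simp⟩
  | succ n ih =>
    obtain ⟨z, hz, h⟩ := ih
    refine ⟨U w + v • P z, D.add_mem (hU w) (D.smul_mem _ (hP z)), ?_⟩
    have h' : P w = B (P z) + v ^ n • P^[n + 1] w := by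
      conv_lhs => rw [h]
      rw [map_add, map_smul, hPB z hz, hBP z, Function.iterate_succ_apply']
    conv_lhs => rw [← hBU w, h']
    rw [map_add, map_smul, smul_add, smul_smul, pow_succ', add_assoc]

/-- `R(B) + N(Bⁿ)` is the preimage of `R(T) + N(Tⁿ)` under `P`. -/
lemma image_add_ker_eq_preimage (hP : ∀ x, P x ∈ D) (hBP : ∀ x, B (P x) = T x)
    (hPB : ∀ x ∈ D, P (B x) = T x) (hU : ∀ x, U x ∈ D)
    (hBU : ∀ x, B (U x) + v • P x = x) (n : ℕ) :
    B '' (D : Set X) + {y : X | y ∈ iterDom (D : Set X) B n ∧ B^[n] y = 0} =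
      P ⁻¹' (Set.range T + {y : X | (T ^ n) y = 0}) := by
  have hcomm : Function.Commute P T := fun y => by rw [← hBP, hPB _ (hP y)]
  ext y
  constructor
  · rintro ⟨_, ⟨x, hx, rfl⟩, z, ⟨hz, hz0⟩, rfl⟩
    refine ⟨T x, ⟨x, rfl⟩, P z, ?_, ?_⟩
    · change (T ^ n) (P z) = 0
      rw [FunLike.coe_pow_eq_iterate, ← (hcomm.iterate_right n) z,
        ← factor_iterate' (T := T) hP hBP hPB n hz, hz0, ← FunLike.coe_pow_eq_iterate,
        map_zero, map_zero]
    · simp only [map_add, hPB x hx]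
  · rintro ⟨_, ⟨x, rfl⟩, w, hw, hy⟩
    obtain ⟨z, hz, h⟩ := exists_eq_add_pow_smul hP hBP hPB hU hBU n w
    obtain ⟨h1, h2⟩ := factor_iterate (T := T) hP hBP hPB n w
    refine ⟨B (U y + v • P x + v • z), ⟨_, ?_, rfl⟩, v • v ^ n • P^[n] w, ⟨?_, ?_⟩, ?_⟩
    · exact D.add_mem (D.add_mem (hU y) (D.smul_mem _ (hP x))) (D.smul_mem _ hz)
    · exact iterDom_smul _ _ (iterDom_smul _ _ h1)
    · rw [← Module.End.coe_pow, map_smul, map_smul, Module.End.coe_pow, h2,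
        ← FunLike.coe_pow_eq_iterate, hw, smul_zero, smul_zero]
    · have hy' : T x + w = P y := hy
      change _ + _ = y
      conv_rhs => rw [← hBU y, ← hy', h]
      simp only [map_add, map_smul, hBP, smul_add]
      abel

/-- A vector of `R(Bⁿ) ∩ N(B)` lies in `R(Tⁿ) ∩ N(T)`, because `vP` is the identity on `N(B)`. -/
lemma image_inter_ker_subset (hP : ∀ x, P x ∈ D) (hBP : ∀ x, B (P x) = T x)
    (hPB : ∀ x ∈ D, P (B x) = T x) (hUB : ∀ x ∈ D, U (B x) + v • P x = x) (n : ℕ) :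
    (B^[n] '' iterDom (D : Set X) B n) ∩ {x : X | x ∈ D ∧ B x = 0} ⊆
      Set.range (T ^ n) ∩ {x : X | T x = 0} := by
  rintro x ⟨⟨y, hy, hyx⟩, hx, hx0⟩
  have hU0 : U 0 = 0 := by simpa using hUB 0 D.zero_mem
  have h1 : v • P x = x := by simpa [hx0, hU0] using hUB x hx
  have h2 : ∀ k : ℕ, v ^ k • P^[k] x = x := by
    intro k
    induction k with
    | zero => simp
    | succ k ih =>
      rw [Function.iterate_succ_apply', pow_succ', mul_smul, ← map_smul, ih, h1]
  refine ⟨⟨v ^ n • y, ?_⟩, ?_⟩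
  · rw [map_smul, FunLike.coe_pow_eq_iterate, ← factor_iterate' (T := T) hP hBP hPB n hy, hyx,
      h2 n]
  · change T x = 0
    rw [← hPB x hx, hx0, map_zero]

end Algebra

/-! ### The operators `∫₀ᵘ e^{-λr} S(r) dr` -/

section Analysis

variable {X : Type*} [NormedAddCommGroup X] [NormedSpace ℂ X] [CompleteSpace X]

/-- An operator with non-empty resolvent set is closed, hence commutes with integrals of
continuous functions. Here `R` inverts `μ + B`. -/
lemma integral_mem_and_map {D : Submodule ℂ X} {B : X →ₗ[ℂ] X} {μ : ℂ} {R : X →L[ℂ] X}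
    (hR1 : ∀ x, R x ∈ D) (hR2 : ∀ x, μ • R x + B (R x) = x)
    (hR3 : ∀ x ∈ D, R (μ • x + B x) = x) {t : ℝ} (ht : 0 ≤ t) {f h : ℝ → X}
    (hf : Continuous f) (hh : Continuous h)
    (hfD : ∀ r, 0 ≤ r → f r ∈ D) (hfh : ∀ r, 0 ≤ r → B (f r) = h r) :
    (∫ r in (0:ℝ)..t, f r) ∈ D ∧ B (∫ r in (0:ℝ)..t, f r) = ∫ r in (0:ℝ)..t, h r := by
  have hi : ∀ g : ℝ → X, Continuous g → IntervalIntegrable g volume 0 t :=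
    fun g hg => hg.intervalIntegrable _ _
  have e : (∫ r in (0:ℝ)..t, f r) =
      R (μ • (∫ r in (0:ℝ)..t, f r) + ∫ r in (0:ℝ)..t, h r) := by
    rw [← intervalIntegral.integral_smul, ← intervalIntegral.integral_add (hi _ (by fun_prop))
      (hi _ hh), ← R.intervalIntegral_comp_comm (hi _ (by fun_prop))]
    refine intervalIntegral.integral_congr fun r hr => ?_
    rw [Set.uIcc_of_le ht] at hr
    rw [← hfh r hr.1, hR3 _ (hfD r hr.1)]
  refine ⟨by rw [e]; exact hR1 _, ?_⟩
  have e2 := hR2 (μ • (∫ r in (0:ℝ)..t, f r) + ∫ r in (0:ℝ)..t, h r)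
  rw [← e] at e2
  exact add_left_cancel e2

lemma hasDerivAt_exp_neg (l : ℂ) (u : ℝ) :
    HasDerivAt (fun r : ℝ => Complex.exp (-l * (r : ℂ))) (-l * Complex.exp (-l * (u : ℂ))) u := by
  have h : HasDerivAt (fun z : ℂ => Complex.exp (-l * z)) (Complex.exp (-l * (u : ℂ)) * -l)
      (u : ℂ) := by
    simpa using ((hasDerivAt_id (u : ℂ)).const_mul (-l)).cexp
  rw [mul_comm]
  exact h.comp_ofReal

/-- Integration by parts for `∫₀ᵘ e^{-λr} f(r) dr` against a primitive of `f`. -/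
lemma integral_exp_smul_eq (l : ℂ) {f : ℝ → X} (hf : Continuous f) (u : ℝ) :
    (∫ r in (0:ℝ)..u, Complex.exp (-l * (r : ℂ)) • f r) =
      Complex.exp (-l * (u : ℂ)) • (∫ r in (0:ℝ)..u, f r) +
        l • ∫ r in (0:ℝ)..u, Complex.exp (-l * (r : ℂ)) • ∫ s in (0:ℝ)..r, f s := by
  have hI : Continuous fun r : ℝ => ∫ s in (0:ℝ)..r, f s :=
    intervalIntegral.continuous_primitive (fun a b => hf.intervalIntegrable a b) 0
  have hd : ∀ r : ℝ, HasDerivAt (fun r : ℝ => Complex.exp (-l * (r : ℂ)) • ∫ s in (0:ℝ)..r, f s)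
      (Complex.exp (-l * (r : ℂ)) • f r +
        (-l * Complex.exp (-l * (r : ℂ))) • ∫ s in (0:ℝ)..r, f s) r := fun r =>
    (hasDerivAt_exp_neg l r).smul (intervalIntegral.integral_hasDerivAt_right
      (hf.intervalIntegrable _ _) (hf.stronglyMeasurableAtFilter _ _) hf.continuousAt)
  have key := intervalIntegral.integral_eq_sub_of_hasDerivAt (a := 0) (b := u) (fun r _ => hd r)
    (Continuous.intervalIntegrable (by fun_prop) _ _)
  rw [intervalIntegral.integral_add (Continuous.intervalIntegrable (by fun_prop) _ _)
    (Continuous.intervalIntegrable (by fun_prop) _ _)] at key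
  simp only [mul_smul, intervalIntegral.integral_smul, intervalIntegral.integral_same, smul_zero,
    sub_zero] at key
  rw [← key]
  module

lemma intervalIntegrable_exp_mul_rpow {α : ℝ} (hα : 0 < α) (l : ℂ) (a b : ℝ) :
    IntervalIntegrable (fun r : ℝ => Complex.exp (-l * (r : ℂ)) * ((r ^ (α - 1) : ℝ) : ℂ) /
      ((Real.Gamma α : ℝ) : ℂ)) volume a b := by
  have h : IntervalIntegrable (fun r : ℝ => ((r ^ (α - 1) : ℝ) : ℂ)) volume a b :=
    have h := intervalIntegral.intervalIntegrable_rpow' (a := a) (b := b) (r := α - 1)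
      (by linarith)
    ⟨h.1.ofReal, h.2.ofReal⟩
  exact (h.continuousOn_mul (by fun_prop)).div_const _

/-- Integration by parts for the scalar kernel, where `u^α/Γ(α+1)` is the primitive of
`u^{α-1}/Γ(α)`. -/
lemma integral_exp_mul_rpow_eq {α : ℝ} (hα : 0 < α) (l : ℂ) {u : ℝ} (hu : 0 ≤ u) :
    (∫ r in (0:ℝ)..u, Complex.exp (-l * (r : ℂ)) * ((r ^ (α - 1) : ℝ) : ℂ) /
        ((Real.Gamma α : ℝ) : ℂ)) =
      Complex.exp (-l * (u : ℂ)) * (((u ^ α : ℝ) : ℂ) / ((Real.Gamma (α + 1) : ℝ) : ℂ)) +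
        l * ∫ r in (0:ℝ)..u, Complex.exp (-l * (r : ℂ)) *
          (((r ^ α : ℝ) : ℂ) / ((Real.Gamma (α + 1) : ℝ) : ℂ)) := by
  have hg : Continuous fun r : ℝ => ((r ^ α : ℝ) : ℂ) / ((Real.Gamma (α + 1) : ℝ) : ℂ) :=
    (Complex.continuous_ofReal.comp (Real.continuous_rpow_const hα.le)).div_const _
  have hΓ : (Real.Gamma α : ℂ) ≠ 0 := by exact_mod_cast (Real.Gamma_pos_of_pos hα).ne'
  have hα' : (α : ℂ) ≠ 0 := by exact_mod_cast hα.ne'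
  have hd : ∀ r ∈ Set.Ioo 0 u, HasDerivAt (fun r : ℝ => Complex.exp (-l * (r : ℂ)) *
      (((r ^ α : ℝ) : ℂ) / ((Real.Gamma (α + 1) : ℝ) : ℂ)))
      (-l * (Complex.exp (-l * (r : ℂ)) * (((r ^ α : ℝ) : ℂ) / ((Real.Gamma (α + 1) : ℝ) : ℂ))) +
        Complex.exp (-l * (r : ℂ)) * ((r ^ (α - 1) : ℝ) : ℂ) / ((Real.Gamma α : ℝ) : ℂ)) r := by
    intro r hr
    have h1 := ((Real.hasDerivAt_rpow_const (p := α) (Or.inl hr.1.ne')).ofReal_comp).div_const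
      ((Real.Gamma (α + 1) : ℝ) : ℂ)
    refine ((hasDerivAt_exp_neg l r).mul h1).congr_deriv ?_
    rw [Real.Gamma_add_one hα.ne']
    push_cast
    field_simp
  have hi1 : IntervalIntegrable (fun r : ℝ => -l * (Complex.exp (-l * (r : ℂ)) *
      (((r ^ α : ℝ) : ℂ) / ((Real.Gamma (α + 1) : ℝ) : ℂ)))) volume 0 u :=
    Continuous.intervalIntegrable (by fun_prop) _ _
  have key := intervalIntegral.integral_eq_sub_of_hasDerivAt_of_le hu
    (Continuous.continuousOn (by fun_prop)) hd (hi1.add (intervalIntegrable_exp_mul_rpow hα l 0 u))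
  rw [intervalIntegral.integral_add hi1 (intervalIntegrable_exp_mul_rpow hα l 0 u),
    intervalIntegral.integral_const_mul] at key
  simp only [Real.zero_rpow hα.ne', Complex.ofReal_zero, zero_div, mul_zero, sub_zero] at key
  rw [← key]
  ring

/-- A strongly continuous family is bounded on compact intervals, so
`x ↦ ∫₀ᵗ e^{-λr} S(r)x dr` is a bounded operator. -/
lemma exists_clm_integral (l : ℂ) {S : ℝ → X →L[ℂ] X}
    (hS : ∀ x, Continuous fun u => S u x) (t : ℝ) :
    ∃ P : X →L[ℂ] X, ∀ x, P x = ∫ r in (0:ℝ)..t, Complex.exp (-l * (r : ℂ)) • S r x := by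
  obtain ⟨C, hC⟩ : ∃ C, ∀ r : Set.uIcc 0 t, ‖S r‖ ≤ C := by
    refine banach_steinhaus fun x => ?_
    obtain ⟨C, hC⟩ := (isCompact_uIcc (a := 0) (b := t)).exists_bound_of_continuousOn
      (hS x).continuousOn
    exact ⟨C, fun r => hC r r.2⟩
  obtain ⟨M, hM⟩ := (isCompact_uIcc (a := 0) (b := t)).exists_bound_of_continuousOn
    (f := fun r : ℝ => Complex.exp (-l * (r : ℂ))) (Continuous.continuousOn (by fun_prop))
  have hi : ∀ x, IntervalIntegrable (fun r : ℝ => Complex.exp (-l * (r : ℂ)) • S r x)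
      volume 0 t := fun x => by
    have := hS x
    exact Continuous.intervalIntegrable (by fun_prop) _ _
  refine ⟨LinearMap.mkContinuous
    { toFun := fun x => ∫ r in (0:ℝ)..t, Complex.exp (-l * (r : ℂ)) • S r x
      map_add' := fun x y => by
        rw [← intervalIntegral.integral_add (hi x) (hi y)]
        simp only [map_add, smul_add]
      map_smul' := fun c x => by
        rw [RingHom.id_apply, ← intervalIntegral.integral_smul]
        simp only [map_smul, smul_comm c] } (M * C * |t - 0|) fun x => ?_, fun x => rfl⟩
  have := intervalIntegral.norm_integral_le_of_norm_le_const (a := 0) (b := t) (C := M * C * ‖x‖)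
    (f := fun r : ℝ => Complex.exp (-l * (r : ℂ)) • S r x) fun r hr => by
      have hr' := Set.uIoc_subset_uIcc hr
      rw [norm_smul, mul_assoc]
      exact mul_le_mul (hM r hr') ((S r).le_of_opNorm_le (hC ⟨r, hr'⟩) x) (norm_nonneg _)
        ((norm_nonneg _).trans (hM r hr'))
  calc _ ≤ M * C * ‖x‖ * |t - 0| := this
    _ = _ := by ring

/-- `(λ - A) ∫₀ᵘ e^{-λr} S(r)x dr = k(u) x - e^{-λu} S(u) x` with
`k(u) = ∫₀ᵘ e^{-λr} r^{α-1}/Γ(α) dr`. -/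
lemma integral_semigroup_mem_and_map {D : Submodule ℂ X} {B : X →ₗ[ℂ] X} {μ : ℂ} {R : X →L[ℂ] X}
    (hR1 : ∀ x, R x ∈ D) (hR2 : ∀ x, μ • R x + B (R x) = x)
    (hR3 : ∀ x ∈ D, R (μ • x + B x) = x) {α : ℝ} (hα : 0 < α) (l : ℂ)
    {f : ℝ → X} (hf : Continuous f) {x : X}
    (hint : ∀ u : ℝ, 0 ≤ u → (∫ s in (0:ℝ)..u, f s) ∈ D ∧
      B (∫ s in (0:ℝ)..u, f s) = l • (∫ s in (0:ℝ)..u, f s) - f u +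
        (((u ^ α : ℝ) : ℂ) / ((Real.Gamma (α + 1) : ℝ) : ℂ)) • x) {u : ℝ} (hu : 0 ≤ u) :
    (∫ r in (0:ℝ)..u, Complex.exp (-l * (r : ℂ)) • f r) ∈ D ∧
      B (∫ r in (0:ℝ)..u, Complex.exp (-l * (r : ℂ)) • f r) =
        (∫ r in (0:ℝ)..u, Complex.exp (-l * (r : ℂ)) * ((r ^ (α - 1) : ℝ) : ℂ) /
          ((Real.Gamma α : ℝ) : ℂ)) • x - Complex.exp (-l * (u : ℂ)) • f u := by
  have hI : Continuous fun r : ℝ => ∫ s in (0:ℝ)..r, f s :=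
    intervalIntegral.continuous_primitive (fun a b => hf.intervalIntegrable a b) 0
  have hg : Continuous fun r : ℝ => ((r ^ α : ℝ) : ℂ) / ((Real.Gamma (α + 1) : ℝ) : ℂ) :=
    (Complex.continuous_ofReal.comp (Real.continuous_rpow_const hα.le)).div_const _
  obtain ⟨h1, h2⟩ := integral_mem_and_map hR1 hR2 hR3 hu
    (f := fun r : ℝ => Complex.exp (-l * (r : ℂ)) • ∫ s in (0:ℝ)..r, f s)
    (h := fun r : ℝ => l • (Complex.exp (-l * (r : ℂ)) • ∫ s in (0:ℝ)..r, f s) -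
      Complex.exp (-l * (r : ℂ)) • f r + (Complex.exp (-l * (r : ℂ)) *
        (((r ^ α : ℝ) : ℂ) / ((Real.Gamma (α + 1) : ℝ) : ℂ))) • x)
    (by fun_prop) (by fun_prop) (fun r hr => D.smul_mem _ (hint r hr).1)
    (fun r hr => by
      rw [map_smul, (hint r hr).2, smul_add, smul_sub, smul_comm l, mul_smul])
  rw [intervalIntegral.integral_add (Continuous.intervalIntegrable (by fun_prop) _ _)
    (Continuous.intervalIntegrable (by fun_prop) _ _),
    intervalIntegral.integral_sub (Continuous.intervalIntegrable (by fun_prop) _ _)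
    (Continuous.intervalIntegrable (by fun_prop) _ _), intervalIntegral.integral_smul,
    intervalIntegral.integral_smul_const] at h2
  have hp := integral_exp_smul_eq l hf u
  refine ⟨?_, ?_⟩
  · rw [hp]
    exact D.add_mem (D.smul_mem _ (hint u hu).1) (D.smul_mem _ h1)
  · rw [integral_exp_mul_rpow_eq hα l hu]
    rw [hp, map_add, map_smul, map_smul, h2, (hint u hu).2, hp]
    module

end Analysis

/-! ### Quasi-Fredholm spectral inclusion -/

theorem stmt_16
    {X : Type*} [NormedAddCommGroup X] [NormedSpace ℂ X] [CompleteSpace X]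
    (α : ℝ) (hα : 0 < α)
    (D : Submodule ℂ X) (A : X →ₗ[ℂ] X)
    (S : ℝ → X →L[ℂ] X)
    (hcont : ∀ x : X, ContinuousOn (fun u : ℝ => S u x) (Set.Ici (0:ℝ)))
    (hcomm : ∀ u v : ℝ, 0 ≤ u → 0 ≤ v → ∀ x : X, S u (S v x) = S v (S u x))
    (hres : ∃ μ : ℂ, ∃ R : X →L[ℂ] X, (∀ x : X, R x ∈ D) ∧
      (∀ x : X, μ • R x - A (R x) = x) ∧ (∀ x ∈ D, R (μ • x - A x) = x))
    (hdom : ∀ u : ℝ, 0 ≤ u → ∀ x ∈ D, S u x ∈ D ∧ A (S u x) = S u (A x) ∧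
      S u x = (((u ^ α : ℝ) : ℂ) / ((Real.Gamma (α + 1) : ℝ) : ℂ)) • x +
        ∫ s in (0:ℝ)..u, S s (A x))
    (hint : ∀ u : ℝ, 0 ≤ u → ∀ x : X, (∫ s in (0:ℝ)..u, S s x) ∈ D ∧
      A (∫ s in (0:ℝ)..u, S s x) =
        S u x - (((u ^ α : ℝ) : ℂ) / ((Real.Gamma (α + 1) : ℝ) : ℂ)) • x)
    (l : ℂ) (t : ℝ)
    (ht : 0 < t) (hphi : phiConst α l t ≠ 0) (d : ℕ)
    (hcl₁ : ∀ n : ℕ, d ≤ n → IsClosed (Set.range ⇑(cSop S α l t ^ n)))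
    (hcl₂ : ∀ n : ℕ, d ≤ n →
      IsClosed (Set.range ⇑(cSop S α l t) + {y : X | (cSop S α l t ^ n) y = 0}))
    (hdis : IsLeast {k : ℕ | ∀ m : ℕ, k ≤ m →
      Set.range ⇑(cSop S α l t ^ m) ∩ {x : X | cSop S α l t x = 0} =
        Set.range ⇑(cSop S α l t ^ k) ∩ {x : X | cSop S α l t x = 0}} d) :
    (∀ n : ℕ, d ≤ n →
      IsClosed ((fun y => l • y - A y)^[n] '' iterDom (D : Set X) (fun y => l • y - A y) n)) ∧
    (∀ n : ℕ, d ≤ n →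
      IsClosed ((fun y => l • y - A y) '' (D : Set X) +
        {y : X | y ∈ iterDom (D : Set X) (fun w => l • w - A w) n ∧
          (fun w => l • w - A w)^[n] y = 0})) ∧
    (∀ m : ℕ, d ≤ m →
      ((fun y => l • y - A y)^[m] '' iterDom (D : Set X) (fun y => l • y - A y) m) ∩
          {x : X | x ∈ D ∧ l • x - A x = 0} =
        ((fun y => l • y - A y)^[d] '' iterDom (D : Set X) (fun y => l • y - A y) d) ∩
          {x : X | x ∈ D ∧ l • x - A x = 0}) := by
  obtain ⟨μ, R, hR1, hR2, hR3⟩ := hres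
  obtain ⟨B, hB⟩ : ∃ B : X →ₗ[ℂ] X, (fun y => l • y - A y) = B :=
    ⟨l • LinearMap.id - A, by ext; simp⟩
  have hB' : ∀ y, B y = l • y - A y := fun y => (congrFun hB y).symm
  -- `μ - A = (μ - l) + B` is inverted by `R`.
  have hR2' : ∀ x, (μ - l) • R x + B (R x) = x := fun x => by
    rw [hB']; refine Eq.trans ?_ (hR2 x); module
  have hR3' : ∀ x ∈ D, R ((μ - l) • x + B x) = x := fun x hx => by
    rw [hB']; refine Eq.trans ?_ (hR3 x hx); congr 1; module
  -- Freezing `S` at `S 0` for negative times makes `r ↦ S r x` continuous on the whole line.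
  set S' : ℝ → X →L[ℂ] X := fun r => S (max r 0) with hS'
  have hSS' : ∀ r, 0 ≤ r → S' r = S r := fun r hr => by simp [hS', max_eq_left hr]
  have hS'c : ∀ x, Continuous fun r => S' r x := fun x =>
    (hcont x).comp_continuous (by fun_prop) fun r => le_max_right r 0
  have hint' : ∀ x u, 0 ≤ u → (∫ s in (0:ℝ)..u, S' s x) ∈ D ∧
      B (∫ s in (0:ℝ)..u, S' s x) = l • (∫ s in (0:ℝ)..u, S' s x) - S' u x +
        (((u ^ α : ℝ) : ℂ) / ((Real.Gamma (α + 1) : ℝ) : ℂ)) • x := by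
    intro x u hu
    have e : (∫ s in (0:ℝ)..u, S' s x) = ∫ s in (0:ℝ)..u, S s x :=
      intervalIntegral.integral_congr fun r hr => by
        rw [Set.uIcc_of_le hu] at hr
        simp only [hSS' r hr.1]
    rw [e, hB', (hint u hu x).2, hSS' u hu]
    exact ⟨(hint u hu x).1, by abel⟩
  -- `p u x = ∫₀ᵘ e^{-lr} S(r)x dr` and `k u = ∫₀ᵘ e^{-lr} r^{α-1}/Γ(α) dr`.
  choose p hp using fun u => exists_clm_integral l hS'c u
  have hpc : ∀ x, Continuous fun u => p u x := fun x => by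
    simp only [hp]
    have := hS'c x
    exact intervalIntegral.continuous_primitive
      (fun a b => Continuous.intervalIntegrable (by fun_prop) a b) 0
  obtain ⟨k, hk⟩ : ∃ k : ℝ → ℂ, ∀ u, k u = ∫ r in (0:ℝ)..u,
      Complex.exp (-l * (r : ℂ)) * ((r ^ (α - 1) : ℝ) : ℂ) / ((Real.Gamma α : ℝ) : ℂ) :=
    ⟨_, fun _ => rfl⟩
  have hkc : Continuous k := by
    rw [funext hk]
    exact intervalIntegral.continuous_primitive
      (fun a b => intervalIntegrable_exp_mul_rpow hα l a b) 0
  have hpB : ∀ x u, 0 ≤ u → p u x ∈ D ∧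
      B (p u x) = k u • x - Complex.exp (-l * (u : ℂ)) • S' u x := fun x u hu => by
    rw [hp, hk]
    exact integral_semigroup_mem_and_map hR1 hR2' hR3' hα l (hS'c x) (hint' x) hu
  have hcommp : ∀ x ∈ D, ∀ u, 0 ≤ u → p u (B x) = B (p u x) := fun x hx u hu => by
    have h1 := hS'c x
    have h2 := hS'c (B x)
    rw [hp, hp]
    refine (integral_mem_and_map hR1 hR2' hR3' hu (by fun_prop) (by fun_prop)
      (fun r hr => ?_) (fun r hr => ?_)).2.symm
    · rw [hSS' r hr]
      exact D.smul_mem _ (hdom r hr x hx).1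
    · rw [hSS' r hr, map_smul, hB', hB', (hdom r hr x hx).2.1, map_sub, map_smul]
  have hphi' : phiConst α l t = ∫ u in (0:ℝ)..t, k u := by simp only [hk]; rfl
  -- `L x = ∫₀ᵗ p(u)x du` satisfies `B L x = φ x - p(t) x`.
  have hL : ∀ x, (∫ u in (0:ℝ)..t, p u x) ∈ D ∧
      B (∫ u in (0:ℝ)..t, p u x) = phiConst α l t • x - p t x := fun x => by
    have h1 := hS'c x
    obtain ⟨h2, h3⟩ := integral_mem_and_map hR1 hR2' hR3' ht.le (hpc x)
      (h := fun u => k u • x - Complex.exp (-l * (u : ℂ)) • S' u x) (by fun_prop)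
      (fun u hu => (hpB x u hu).1) (fun u hu => (hpB x u hu).2)
    refine ⟨h2, ?_⟩
    rw [h3, intervalIntegral.integral_sub (Continuous.intervalIntegrable (by fun_prop) _ _)
      (Continuous.intervalIntegrable (by fun_prop) _ _), intervalIntegral.integral_smul_const,
      hphi', hp t x]
  have hLcomm : ∀ x ∈ D, (∫ u in (0:ℝ)..t, p u (B x)) = B (∫ u in (0:ℝ)..t, p u x) :=
    fun x hx => (integral_mem_and_map hR1 hR2' hR3' ht.le (hpc x) (hpc (B x))
      (fun u hu => (hpB x u hu).1) (fun u hu => (hcommp x hx u hu).symm)).2.symm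
  have hc : cConst α l t = Complex.exp (l * (t : ℂ)) * k t := by
    rw [hk, ← intervalIntegral.integral_const_mul, cConst]
    refine intervalIntegral.integral_congr fun r _ => ?_
    have e : Complex.exp (l * ((t - r : ℝ) : ℂ)) =
        Complex.exp (l * (t : ℂ)) * Complex.exp (-l * (r : ℂ)) := by
      rw [← Complex.exp_add]; congr 1; push_cast; ring
    simp only [e]
    ring
  have hee : Complex.exp (l * (t : ℂ)) * Complex.exp (-l * (t : ℂ)) = 1 := by
    rw [← Complex.exp_add]; simp
  set T := cSop S α l t with hT
  -- The factor `P = e^{lt} p(t)` of `T` and the Bézout coefficients `U = φ⁻¹ L`, `v = φ⁻¹ e^{-lt}`.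
  set φ := phiConst α l t with hφ
  set P : X →L[ℂ] X := Complex.exp (l * (t : ℂ)) • p t with hPdef
  set U : X → X := fun x => φ⁻¹ • ∫ u in (0:ℝ)..t, p u x with hUdef
  set v : ℂ := φ⁻¹ * Complex.exp (-l * (t : ℂ)) with hv
  have hvP : ∀ x, v • P x = φ⁻¹ • p t x := fun x => by
    rw [hPdef, hv, smul_apply, smul_smul, mul_assoc, mul_comm (Complex.exp _), hee, mul_one]
  have hP : ∀ x, P x ∈ D := fun x => D.smul_mem _ (hpB x t ht.le).1
  have hBP : ∀ x, B (P x) = T x := fun x => by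
    rw [hPdef, smul_apply, map_smul, (hpB x t ht.le).2, smul_sub, smul_smul,
      smul_smul, hee, one_smul, ← hc, hSS' t ht.le]
    rfl
  have hPB : ∀ x ∈ D, P (B x) = T x := fun x hx => by
    rw [← hBP, hPdef, smul_apply, smul_apply,
      hcommp x hx t ht.le, map_smul]
  have hU : ∀ x, U x ∈ D := fun x => D.smul_mem _ (hL x).1
  have hBU : ∀ x, B (U x) + v • P x = x := fun x => by
    rw [hvP, hUdef, map_smul, (hL x).2, ← smul_add, sub_add_cancel, smul_smul,
      inv_mul_cancel₀ hphi, one_smul]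
  have hUB : ∀ x ∈ D, U (B x) + v • P x = x := fun x hx => by
    have e : U (B x) = B (U x) := by
      simp only [hUdef]
      rw [hLcomm x hx, map_smul]
    rw [e, hBU]
  rw [hB]
  have hker : {x : X | x ∈ D ∧ l • x - A x = 0} = {x : X | x ∈ D ∧ B x = 0} := by
    simp only [hB']
  rw [hker]
  refine ⟨fun n hn => ?_, fun n hn => ?_, fun m hm => ?_⟩
  · rw [image_eq_preimage hP hBP hPB hU hBU hUB n]
    exact (hcl₁ n hn).preimage (P.continuous.iterate n)
  · rw [image_add_ker_eq_preimage hP hBP hPB hU hBU n]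
    exact (hcl₂ n hn).preimage P.continuous
  · refine Set.Subset.antisymm
      (Set.inter_subset_inter_left _ (iterDom_image_antitone hm)) fun x hx => ⟨?_, hx.2⟩
    have hx' := image_inter_ker_subset hP hBP hPB hUB d hx
    rw [← hdis.1 m hm] at hx'
    obtain ⟨z, rfl⟩ := hx'.1
    obtain ⟨h1, h2⟩ := factor_iterate (T := T) hP hBP hPB m z
    exact ⟨P^[m] z, h1, by rw [h2, FunLike.coe_pow_eq_iterate]⟩
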